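/- Let G be a connected bipartite graph with color classes E and V, edge set A ⊆ E × V, and s = |E| + |V| vertices. For a subset F ⊆ A, the points { 𝐞 + 𝐯 : (e,v) ∈ F } form the vertex set of an (s − 2)-dimensional simplex (i.e., |F| = s − 1 and the points are affinely independent) if and only if F is a spanning tree of G. In particular, the maximal simplices in the root polytope Q_G whose vertices are vertices of Q_G correspond bijectively to the spanning trees of G. -/

import Mathlib

/-!
Write `W` for the linear span of the points `pt p`, `p ∈ F`. All these points lie on the affine
hyperplane where the `E`-coordinates sum to `1`, which misses the origin, so affine independence
is the same as linear independence, that is, `|F| = dim W`.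

The orthogonal complement `Wᗮ` consists of the vectors `x` with `x_e + x_v = 0` for every edge
`(e, v) ∈ F`. After flipping the signs of the `V`-coordinates these are the functions constant on
the connected components of the graph of `F`, so the graph is connected iff `dim Wᗮ = 1`, i.e. iff
`dim W = s - 1`. The theorem then follows from the characterisation of trees as the connected
graphs with `s - 1` edges.
-/


/-- The point 𝐞 + 𝐯 of ℝ^E ⊕ ℝ^V associated to an edge (e,v) of a bipartite graph. -/
noncomputable def pt {E V : Type*} [Fintype E] [Fintype V] [DecidableEq E] [DecidableEq V]
    (p : E × V) : EuclideanSpace ℝ (E ⊕ V) :=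
  EuclideanSpace.single (Sum.inl p.1) (1 : ℝ) + EuclideanSpace.single (Sum.inr p.2) (1 : ℝ)

/-- The simple graph on the vertex set `E ⊔ V` whose edges are the pairs in `F`. -/
def graphOf {E V : Type*} (F : Set (E × V)) : SimpleGraph (E ⊕ V) :=
  SimpleGraph.fromRel fun x y => ∃ p ∈ F, x = Sum.inl p.1 ∧ y = Sum.inr p.2

/-- The linear span `W` of the points `𝐞 + 𝐯` with `(e, v) ∈ F`. -/
noncomputable def edgeSpan {E V : Type*} [Fintype E] [Fintype V] [DecidableEq E] [DecidableEq V]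
    (F : Set (E × V)) : Submodule ℝ (EuclideanSpace ℝ (E ⊕ V)) :=
  Submodule.span ℝ (Set.range fun p : F => pt (p : E × V))

/-- The vector that is `f` on `E` and `-f` on `V`. -/
noncomputable def signed {E V : Type*} (f : E ⊕ V → ℝ) : EuclideanSpace ℝ (E ⊕ V) :=
  WithLp.toLp 2 (Sum.elim (fun e => f (Sum.inl e)) fun v => -f (Sum.inr v))

section

variable {E V : Type*} [Fintype E] [Fintype V] [DecidableEq E] [DecidableEq V]

lemma mem_orthogonal_edgeSpan (F : Set (E × V)) (x : EuclideanSpace ℝ (E ⊕ V)) :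
    x ∈ (edgeSpan F)ᗮ ↔ ∀ p ∈ F, x (Sum.inl p.1) + x (Sum.inr p.2) = 0 := by
  rw [edgeSpan, Submodule.mem_orthogonal]
  constructor
  · intro h p hp
    have := h (pt p) (Submodule.subset_span ⟨⟨p, hp⟩, rfl⟩)
    simpa [pt, inner_add_left, EuclideanSpace.inner_single_left] using this
  · intro h u hu
    induction hu using Submodule.span_induction with
    | mem u hu =>
      obtain ⟨p, rfl⟩ := hu
      simpa [pt, inner_add_left, EuclideanSpace.inner_single_left] using h p p.2
    | zero => simp
    | add a b _ _ ha hb => simp [inner_add_left, ha, hb]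
    | smul c a _ ha => simp [inner_smul_left, ha]

omit [Fintype E] [Fintype V] [DecidableEq E] [DecidableEq V] in
lemma graphOf_adj_of_mem {F : Set (E × V)} {p : E × V} (hp : p ∈ F) :
    (graphOf F).Adj (Sum.inl p.1) (Sum.inr p.2) := by
  simp only [graphOf, SimpleGraph.fromRel_adj]
  exact ⟨by simp, Or.inl ⟨p, hp, rfl, rfl⟩⟩

lemma signed_mem_orthogonal {F : Set (E × V)} {f : E ⊕ V → ℝ}
    (hf : ∀ a b, (graphOf F).Adj a b → f a = f b) : signed f ∈ (edgeSpan F)ᗮ := by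
  rw [mem_orthogonal_edgeSpan]
  intro p hp
  simp [signed, hf _ _ (graphOf_adj_of_mem hp)]

/-- Every vector of `Wᗮ` arises from a function constant along the edges. -/
lemma exists_signed_of_mem_orthogonal {F : Set (E × V)} {x : EuclideanSpace ℝ (E ⊕ V)}
    (hx : x ∈ (edgeSpan F)ᗮ) :
    ∃ f : E ⊕ V → ℝ, (∀ a b, (graphOf F).Adj a b → f a = f b) ∧ x = signed f := by
  rw [mem_orthogonal_edgeSpan] at hx
  refine ⟨Sum.elim (fun e => x (Sum.inl e)) (fun v => -x (Sum.inr v)), ?_, ?_⟩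
  · intro a b hab
    simp only [graphOf, SimpleGraph.fromRel_adj] at hab
    obtain ⟨-, ⟨p, hp, rfl, rfl⟩ | ⟨p, hp, rfl, rfl⟩⟩ := hab
    · simp only [Sum.elim_inl, Sum.elim_inr]
      linarith [hx p hp]
    · simp only [Sum.elim_inl, Sum.elim_inr]
      linarith [hx p hp]
  · ext (e | v) <;> simp [signed]

lemma connected_iff_finrank_orthogonal [Nonempty (E ⊕ V)] (F : Set (E × V)) :
    (graphOf F).Connected ↔ Module.finrank ℝ (edgeSpan F)ᗮ = 1 := by
  have hone : signed (fun _ => 1) ∈ (edgeSpan F)ᗮ :=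
    signed_mem_orthogonal (F := F) fun _ _ _ => rfl
  have hne : (⟨signed fun _ => 1, hone⟩ : (edgeSpan F)ᗮ) ≠ 0 := by
    intro h
    have h0 : (signed fun _ => 1 : EuclideanSpace ℝ (E ⊕ V)) = 0 := congrArg Subtype.val h
    obtain ⟨e | v⟩ := ‹Nonempty (E ⊕ V)›
    · simpa [signed] using congrArg (fun x => x (Sum.inl e)) h0
    · simpa [signed] using congrArg (fun x => x (Sum.inr v)) h0
  rw [finrank_eq_one_iff_of_nonzero' _ hne]
  constructor
  · rintro hc ⟨x, hx⟩
    obtain ⟨f, hf, rfl⟩ := exists_signed_of_mem_orthogonal hx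
    obtain ⟨a⟩ := ‹Nonempty (E ⊕ V)›
    have hconst : ∀ b, f b = f a := by
      intro b
      obtain ⟨w⟩ := hc.preconnected b a
      induction w with
      | nil => rfl
      | cons h _ ih => exact (hf _ _ h).trans ih
    refine ⟨f a, Subtype.ext ?_⟩
    ext (e | v) <;> simp [signed, hconst]
  · intro h
    rw [SimpleGraph.connected_iff]
    refine ⟨fun a b => ?_, inferInstance⟩
    classical
    -- The indicator function of the component of `a` has to be a constant function.
    let f : E ⊕ V → ℝ := fun z => if (graphOf F).Reachable a z then 1 else 0
    have hf : signed f ∈ (edgeSpan F)ᗮ := by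
      refine signed_mem_orthogonal fun z z' hz => ?_
      have : (graphOf F).Reachable a z ↔ (graphOf F).Reachable a z' :=
        ⟨fun h => h.trans hz.reachable, fun h => h.trans hz.symm.reachable⟩
      simp [f, this]
    obtain ⟨c, hc⟩ := h ⟨_, hf⟩
    have hc' : c • (signed fun _ => 1) = signed f := congrArg Subtype.val hc
    have hfc : ∀ z, f z = c := by
      rintro (e | v)
      · simpa [signed] using (congrArg (fun x => x (Sum.inl e)) hc').symm
      · simpa [signed] using (congrArg (fun x => x (Sum.inr v)) hc').symm
    by_contra hab
    have ha := hfc a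
    have hb := hfc b
    simp only [f, hab, SimpleGraph.Reachable.refl, if_true, if_false] at ha hb
    linarith

/-- The points lie on an affine hyperplane missing the origin, so affine and linear independence
agree. -/
lemma affineIndependent_pt_iff (F : Set (E × V)) :
    AffineIndependent ℝ (fun p : F => pt (p : E × V)) ↔
      LinearIndependent ℝ (fun p : F => pt (p : E × V)) := by
  rw [affineIndependent_iff, linearIndependent_iff']
  refine ⟨fun h s w hw => h s w ?_ hw, fun h s w _ hw => h s w hw⟩
  -- Pair the relation with the vector that is `1` on `E` and `0` on `V`.
  have := congrArg (fun x : EuclideanSpace ℝ (E ⊕ V) =>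
    inner ℝ (WithLp.toLp 2 (Sum.elim (fun _ => (1 : ℝ)) fun _ => 0)) x) hw
  simpa [pt, inner_sum, inner_add_right, inner_smul_right,
    EuclideanSpace.inner_single_right] using this

omit [Fintype E] [Fintype V] [DecidableEq E] [DecidableEq V] in
lemma card_edgeSet_graphOf (F : Set (E × V)) : Nat.card (graphOf F).edgeSet = F.ncard := by
  have hinj : Function.Injective
      (fun p : E × V => (s(Sum.inl p.1, Sum.inr p.2) : Sym2 (E ⊕ V))) := by
    rintro ⟨e, v⟩ ⟨e', v'⟩ h
    simpa using h
  have himg : (graphOf F).edgeSet = (fun p : E × V => s(Sum.inl p.1, Sum.inr p.2)) '' F := by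
    ext z
    induction z using Sym2.ind with
    | _ a b =>
      rw [SimpleGraph.mem_edgeSet]
      constructor
      · intro hab
        simp only [graphOf, SimpleGraph.fromRel_adj] at hab
        obtain ⟨-, ⟨p, hp, rfl, rfl⟩ | ⟨p, hp, rfl, rfl⟩⟩ := hab
        · exact ⟨p, hp, rfl⟩
        · exact ⟨p, hp, Sym2.eq_swap⟩
      · rintro ⟨p, hp, h⟩
        rw [← SimpleGraph.mem_edgeSet, ← h]
        exact graphOf_adj_of_mem hp
  rw [himg, Nat.card_coe_set_eq, Set.ncard_image_of_injective _ hinj]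

end

/-- For a connected bipartite graph `G` on `s` vertices with edge set `A` and `F ⊆ A`,
the points `𝐞 + 𝐯`, `(e,v) ∈ F`, are the vertex set of an `(s-2)`-dimensional simplex
(that is, there are `s - 1` of them and they are affinely independent) iff `F` is a
spanning tree of `G`. -/
theorem maximal_simplices_are_spanning_trees {E V : Type*} [Fintype E] [Fintype V]
    [DecidableEq E] [DecidableEq V] (A : Set (E × V)) (hconn : (graphOf A).Connected)
    (F : Set (E × V)) (hFA : F ⊆ A) :
    (F.ncard = Fintype.card E + Fintype.card V - 1 ∧
        AffineIndependent ℝ (fun p : F => pt (p : E × V)))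
      ↔ (graphOf F).IsTree := by
  classical
  have : Nonempty (E ⊕ V) := hconn.nonempty
  have hpos : 0 < Fintype.card E + Fintype.card V := by
    rw [← Fintype.card_sum]
    exact Fintype.card_pos
  have hdim := (edgeSpan F).finrank_add_finrank_orthogonal
  rw [finrank_euclideanSpace, Fintype.card_sum] at hdim
  rw [affineIndependent_pt_iff, linearIndependent_iff_card_eq_finrank_span,
    SimpleGraph.isTree_iff_connected_and_card, connected_iff_finrank_orthogonal,
    card_edgeSet_graphOf, Nat.card_eq_fintype_card, Fintype.card_sum,
    ← Nat.card_eq_fintype_card (α := F), Nat.card_coe_set_eq]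
  change _ ∧ F.ncard = Module.finrank ℝ (edgeSpan F) ↔ _
  omega
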